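/- Let n ∈ ℕ be even and positive, x_0 ∈ ℝ, h > 0, and x_k = x_0 + k·h for k = 0, ..., n. Let e : ℝ → ℝ be a bounded function with ‖e‖_∞ < ε. Then the derivative of the Lagrange interpolant of e at the central node satisfies |p_n'(e, x_{n/2})| ≤ (ε/h) · Σ_{k=0, k≠n/2}^{n} |Π_{i=0, i≠k, i≠n/2}^{n} (n/2 − i)| / |Π_{i=0, i≠k}^{n} (k − i)|. -/

import Mathlib

open Finset

/-- The `k`-th Lagrange basis polynomial `L_{n,k}` for the equispaced nodes
`x_i = x₀ + i·h`, `i = 0, …, n`:  `L_{n,k}(x) = Π_{i ≠ k} (x − x_i)/(x_k − x_i)`. -/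
noncomputable def lagrangeBasis (n : ℕ) (x₀ h : ℝ) (k : ℕ) (x : ℝ) : ℝ :=
  ∏ i ∈ (Finset.range (n + 1)).erase k,
    (x - (x₀ + (i : ℝ) * h)) / ((x₀ + (k : ℝ) * h) - (x₀ + (i : ℝ) * h))

/-- The Lagrange interpolating polynomial `p_n(f, x) = Σ_{k=0}^{n} f(x_k) · L_{n,k}(x)`
of `f` at the equispaced nodes `x_k = x₀ + k·h`. -/
noncomputable def lagrangeInterp (n : ℕ) (x₀ h : ℝ) (f : ℝ → ℝ) (x : ℝ) : ℝ :=
  ∑ k ∈ Finset.range (n + 1), f (x₀ + (k : ℝ) * h) * lagrangeBasis n x₀ h k x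

/-- The derivative of `L_{n,k}` at a node `x_m` with `m ≠ k`. -/
lemma hasDerivAt_lagrangeBasis_of_ne {n k m : ℕ} (hm : m ∈ range (n + 1)) (hkm : k ≠ m)
    (x₀ : ℝ) {h : ℝ} (hh : h ≠ 0) :
    HasDerivAt (lagrangeBasis n x₀ h k)
      (h⁻¹ * ((∏ i ∈ ((range (n + 1)).erase k).erase m, ((m : ℝ) - i)) /
        ∏ i ∈ (range (n + 1)).erase k, ((k : ℝ) - i))) (x₀ + m * h) := by
  have hmem : m ∈ (range (n + 1)).erase k := mem_erase.2 ⟨hkm.symm, hm⟩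
  set Q : ℝ → ℝ := fun x ↦ ∏ i ∈ ((range (n + 1)).erase k).erase m,
    (x - (x₀ + (i : ℝ) * h)) / ((x₀ + (k : ℝ) * h) - (x₀ + (i : ℝ) * h)) with hQ
  have hfun : lagrangeBasis n x₀ h k = fun x ↦
      (x - (x₀ + (m : ℝ) * h)) / ((x₀ + (k : ℝ) * h) - (x₀ + (m : ℝ) * h)) * Q x := by
    ext x
    exact (mul_prod_erase _ _ hmem).symm
  have hQd : DifferentiableAt ℝ Q (x₀ + m * h) := by
    simp only [hQ]
    fun_prop
  have hQm : Q (x₀ + m * h) = (∏ i ∈ ((range (n + 1)).erase k).erase m, ((m : ℝ) - i)) /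
      ∏ i ∈ ((range (n + 1)).erase k).erase m, ((k : ℝ) - i) := by
    simp only [hQ]
    rw [← prod_div_distrib]
    refine prod_congr rfl fun i _ ↦ ?_
    rw [add_sub_add_left_eq_sub, add_sub_add_left_eq_sub, ← sub_mul, ← sub_mul,
      mul_div_mul_right _ _ hh]
  rw [hfun]
  refine ((((hasDerivAt_id (x₀ + m * h)).sub_const (x₀ + (m : ℝ) * h)).div_const
    ((x₀ + (k : ℝ) * h) - (x₀ + (m : ℝ) * h))).mul hQd.hasDerivAt).congr_deriv ?_
  rw [hQm, ← mul_prod_erase _ _ hmem, add_sub_add_left_eq_sub, ← sub_mul]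
  simp only [id, sub_self, zero_div, zero_mul, add_zero]
  rw [one_div, mul_inv, div_mul_eq_div_div, div_right_comm]
  ring

lemma sum_erase_inv_sub_center (m : ℕ) :
    ∑ i ∈ (range (m + m + 1)).erase m, ((m : ℝ) - i)⁻¹ = 0 := by
  have hneg : ∑ i ∈ (range (m + m + 1)).erase m, ((m : ℝ) - i)⁻¹ =
      ∑ i ∈ (range (m + m + 1)).erase m, -((m : ℝ) - i)⁻¹ := by
    refine sum_nbij' (fun i ↦ m + m - i) (fun i ↦ m + m - i) ?_ ?_ ?_ ?_ ?_
    all_goals simp only [mem_erase, mem_range]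
    any_goals omega
    intro i hi
    rw [Nat.cast_sub (by omega), ← inv_neg]
    push_cast
    ring
  rw [sum_neg_distrib] at hneg
  linarith

/-- The central basis polynomial is stationary at the central node, by symmetry of the nodes. -/
lemma hasDerivAt_lagrangeBasis_center (m : ℕ) (x₀ : ℝ) {h : ℝ} (hh : h ≠ 0) :
    HasDerivAt (lagrangeBasis (m + m) x₀ h m) 0 (x₀ + m * h) := by
  have hne : ∀ i ∈ (range (m + m + 1)).erase m,
      (x₀ + (m : ℝ) * h) - (x₀ + (i : ℝ) * h) ≠ 0 := fun i hi ↦ by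
    rw [add_sub_add_left_eq_sub, ← sub_mul]
    exact mul_ne_zero (sub_ne_zero.2 (Nat.cast_injective.ne (ne_of_mem_erase hi).symm)) hh
  have key := HasDerivAt.fun_finsetProd (u := (range (m + m + 1)).erase m)
    (x := x₀ + (m : ℝ) * h) fun i _ ↦
    ((hasDerivAt_id (x₀ + (m : ℝ) * h)).sub_const (x₀ + (i : ℝ) * h)).div_const
      ((x₀ + (m : ℝ) * h) - (x₀ + (i : ℝ) * h))
  refine key.congr_deriv ?_
  rw [← mul_zero h⁻¹, ← sum_erase_inv_sub_center m, mul_sum]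
  refine sum_congr rfl fun i _ ↦ ?_
  simp only [id]
  rw [prod_eq_one fun j hj ↦ div_self (hne j (mem_of_mem_erase hj)),
    add_sub_add_left_eq_sub, ← sub_mul]
  simp [mul_comm]

/-- Bound on the derivative of the Lagrange interpolant of bounded noise `e` at the central
node: if `‖e‖_∞ < ε`, then
`|p_n'(e, x_{n/2})| ≤ (ε/h) · Σ_{k ≠ n/2} |Π_{i ≠ k, n/2} (n/2 − i)| / |Π_{i ≠ k} (k − i)|`. -/
theorem noise_interp_deriv_bound (n : ℕ) (hn : Even n) (hpos : 0 < n)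
    (x₀ h ε : ℝ) (hh : 0 < h) (e : ℝ → ℝ) (he : ∀ x, |e x| < ε) :
    |deriv (lagrangeInterp n x₀ h e) (x₀ + ((n / 2 : ℕ) : ℝ) * h)| ≤
      (ε / h) * ∑ k ∈ (Finset.range (n + 1)).erase (n / 2),
        |∏ i ∈ ((Finset.range (n + 1)).erase k).erase (n / 2),
            (((n / 2 : ℕ) : ℝ) - (i : ℝ))| /
          |∏ i ∈ (Finset.range (n + 1)).erase k, ((k : ℝ) - (i : ℝ))| := by
  obtain ⟨m, rfl⟩ := hn
  rw [show (m + m) / 2 = m by omega]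
  have hm : m ∈ range (m + m + 1) := mem_range.2 (by omega)
  set c : ℕ → ℝ := fun k ↦
    (∏ i ∈ ((range (m + m + 1)).erase k).erase m, ((m : ℝ) - i)) /
      ∏ i ∈ (range (m + m + 1)).erase k, ((k : ℝ) - i) with hc
  have hder : HasDerivAt (lagrangeInterp (m + m) x₀ h e)
      (∑ k ∈ range (m + m + 1), e (x₀ + k * h) * if k = m then 0 else h⁻¹ * c k)
      (x₀ + m * h) := by
    refine HasDerivAt.fun_sum fun k _ ↦ HasDerivAt.const_mul _ ?_
    split_ifs with hk
    · subst hk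
      exact hasDerivAt_lagrangeBasis_center k x₀ hh.ne'
    · exact hasDerivAt_lagrangeBasis_of_ne hm hk x₀ hh.ne'
  rw [hder.deriv, ← add_sum_erase _ _ hm, if_pos rfl, mul_zero, zero_add, mul_sum]
  refine (abs_sum_le_sum_abs _ _).trans (sum_le_sum fun k hk ↦ ?_)
  rw [if_neg (ne_of_mem_erase hk), ← abs_div, abs_mul, abs_mul, abs_of_pos (inv_pos.2 hh),
    ← mul_assoc, ← div_eq_mul_inv]
  gcongr
  exact (he _).le
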